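/- Let N,d ≥ 1, let Δ ∈ ℝ^{N×N} be symmetric positive semidefinite with largest eigenvalue λ₁ and smallest eigenvalue λ₂, let λ > 0, and let 0 < τ ≤ 1/λ₁ (assuming λ₁ > 0). Define Z^(k+1) = (I − τΔ)Z^(k) from any Z^(0) ∈ ℝ^{N×d} and E(Z,k) = ‖Z − Z^(k)‖_F² + λ·tr(Zᵀ Δ Z). Then the energy decreases at a geometric rate: for every k ≥ 1, E(Z^(k), k−1) ≤ (1 − τλ₂)^{2(k−1)} · E(Z^(1), 0). -/

import Mathlib

open Finset Matrix

lemma aux_diag {N : ℕ} (Δ : Matrix (Fin N) (Fin N) ℝ) (hH : Δ.IsHermitian) :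
    ∃ U : Matrix (Fin N) (Fin N) ℝ, U * Uᵀ = 1 ∧ Uᵀ * U = 1 ∧
      Δ = U * diagonal hH.eigenvalues * Uᵀ := by
  refine ⟨(hH.eigenvectorUnitary : Matrix (Fin N) (Fin N) ℝ), ?_, ?_, ?_⟩
  · have := Unitary.coe_mul_star_self hH.eigenvectorUnitary
    simpa [star_eq_conjTranspose, conjTranspose_eq_transpose_of_trivial] using this
  · have := Unitary.coe_star_mul_self hH.eigenvectorUnitary
    simpa [star_eq_conjTranspose, conjTranspose_eq_transpose_of_trivial] using this
  · have := hH.spectral_theorem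
    rw [Unitary.conjStarAlgAut_apply] at this
    simpa [star_eq_conjTranspose, conjTranspose_eq_transpose_of_trivial, Function.comp_def] using this

lemma aux_sq {N d : ℕ} (A : Matrix (Fin N) (Fin d) ℝ) :
    ∑ i, ∑ c, (A i c) ^ 2 = (Aᵀ * A).trace := by
  simp only [trace, Matrix.diag, Matrix.mul_apply, transpose_apply]
  rw [Finset.sum_comm]
  simp only [sq]

lemma aux_sq_orth {N d : ℕ} (U : Matrix (Fin N) (Fin N) ℝ) (hU : U * Uᵀ = 1)
    (A : Matrix (Fin N) (Fin d) ℝ) :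
    ∑ i, ∑ c, (A i c) ^ 2 = ∑ i, ∑ c, ((Uᵀ * A) i c) ^ 2 := by
  rw [aux_sq, aux_sq, transpose_mul, transpose_transpose, Matrix.mul_assoc, ← Matrix.mul_assoc U,
    hU, Matrix.one_mul]

lemma aux_tr {N d : ℕ} (U : Matrix (Fin N) (Fin N) ℝ) (m : Fin N → ℝ)
    (A : Matrix (Fin N) (Fin d) ℝ) :
    (Aᵀ * (U * diagonal m * Uᵀ) * A).trace = ∑ i, ∑ c, m i * ((Uᵀ * A) i c) ^ 2 := by
  have : Aᵀ * (U * diagonal m * Uᵀ) * A = (Uᵀ * A)ᵀ * (diagonal m * (Uᵀ * A)) := by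
    simp [transpose_mul, Matrix.mul_assoc]
  rw [this]
  generalize Uᵀ * A = W
  simp only [trace, Matrix.diag, Matrix.mul_apply (M := Wᵀ), transpose_apply, diagonal_mul]
  rw [Finset.sum_comm]
  refine Finset.sum_congr rfl fun i _ => Finset.sum_congr rfl fun c _ => by ring

/-- geometric decrease of the energy
`E(Z,k) = ‖Z − Z^(k)‖_F² + lam tr(Zᵀ Δ Z)` along the diffusion iteration
`Z^(k+1) = (I − τΔ) Z^(k)`:
`E(Z^(k), k−1) ≤ (1 − τ lam2)^{2(k−1)} E(Z^(1), 0)` for every `k ≥ 1`. -/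
theorem stmt_19 (N d : ℕ) (hN : 1 ≤ N) (hd : 1 ≤ d)
    (Δ : Matrix (Fin N) (Fin N) ℝ)
    (hH : Δ.IsHermitian) (hΔ : Δ.PosSemidef)
    (lam1 lam2 : ℝ)
    (hlam1 : IsGreatest (Set.range hH.eigenvalues) lam1)
    (hlam2 : IsLeast (Set.range hH.eigenvalues) lam2)
    (lam : ℝ) (hlam : 0 < lam)
    (hlam1pos : 0 < lam1)
    (τ : ℝ) (hτ : 0 < τ) (hτ1 : τ ≤ 1 / lam1)
    (Z : ℕ → Matrix (Fin N) (Fin d) ℝ)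
    (hZ : ∀ k, Z (k + 1) = ((1 : Matrix (Fin N) (Fin N) ℝ) - τ • Δ) * Z k) :
    ∀ k, 1 ≤ k →
      (∑ i, ∑ c, (Z k i c - Z (k - 1) i c) ^ 2)
          + lam * ((Z k)ᵀ * Δ * Z k).trace
        ≤ (1 - τ * lam2) ^ (2 * (k - 1))
          * ((∑ i, ∑ c, (Z 1 i c - Z 0 i c) ^ 2)
            + lam * ((Z 1)ᵀ * Δ * Z 1).trace) := by
  obtain ⟨U, hU1, hU2, hD⟩ := aux_diag Δ hH
  set m := hH.eigenvalues with hm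
  have hW : ∀ k i c, (Uᵀ * Z (k + 1)) i c = (1 - τ * m i) * (Uᵀ * Z k) i c := by
    intro k i c
    have : Uᵀ * Z (k + 1) = Uᵀ * Z k - τ • (diagonal m * (Uᵀ * Z k)) := by
      rw [hZ, hD, Matrix.sub_mul, Matrix.one_mul, Matrix.mul_sub, Matrix.smul_mul, Matrix.mul_smul]
      simp only [← Matrix.mul_assoc]
      rw [hU2, Matrix.one_mul]
    rw [this]
    simp only [Matrix.sub_apply, Matrix.smul_apply, diagonal_mul, smul_eq_mul]
    ring
  have hE : ∀ k, (∑ i, ∑ c, (Z (k + 1) i c - Z k i c) ^ 2)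
      + lam * ((Z (k + 1))ᵀ * Δ * Z (k + 1)).trace
      = ∑ i, ∑ c, ((τ * m i) ^ 2 + lam * m i * (1 - τ * m i) ^ 2) * ((Uᵀ * Z k) i c) ^ 2 := by
    intro k
    have h1 := aux_sq_orth U hU1 (Z (k + 1) - Z k)
    simp only [Matrix.mul_sub, Matrix.sub_apply] at h1
    rw [h1, hD, aux_tr, Finset.mul_sum, ← Finset.sum_add_distrib]
    refine Finset.sum_congr rfl fun i _ => ?_
    rw [Finset.mul_sum, ← Finset.sum_add_distrib]
    refine Finset.sum_congr rfl fun c _ => ?_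
    rw [hW]
    ring
  have hm0 : ∀ i, 0 ≤ m i := fun i => hΔ.eigenvalues_nonneg i
  have hm1 : ∀ i, m i ≤ lam1 := fun i => hlam1.2 ⟨i, rfl⟩
  have hm2 : ∀ i, lam2 ≤ m i := fun i => hlam2.2 ⟨i, rfl⟩
  have ht : τ * lam1 ≤ 1 := by rwa [le_div_iff₀ hlam1pos] at hτ1
  have hstep : ∀ k, (∑ i, ∑ c, (Z (k + 1 + 1) i c - Z (k + 1) i c) ^ 2)
      + lam * ((Z (k + 1 + 1))ᵀ * Δ * Z (k + 1 + 1)).trace ≤ (1 - τ * lam2) ^ 2 *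
      ((∑ i, ∑ c, (Z (k + 1) i c - Z k i c) ^ 2)
      + lam * ((Z (k + 1))ᵀ * Δ * Z (k + 1)).trace) := by
    intro k
    rw [hE, hE, Finset.mul_sum]
    refine Finset.sum_le_sum fun i _ => ?_
    rw [Finset.mul_sum]
    refine Finset.sum_le_sum fun c _ => ?_
    rw [hW, mul_pow]
    have a1 : 0 ≤ 1 - τ * m i := by nlinarith [hm1 i]
    have a2 : 1 - τ * m i ≤ 1 - τ * lam2 := by nlinarith [hm2 i]
    have a3 : (1 - τ * m i) ^ 2 ≤ (1 - τ * lam2) ^ 2 := by gcongr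
    have a4 : 0 ≤ ((τ * m i) ^ 2 + lam * m i * (1 - τ * m i) ^ 2) * ((Uᵀ * Z k) i c) ^ 2 := by
      have := hm0 i
      positivity
    nlinarith [mul_le_mul_of_nonneg_right a3 a4]
  intro k hk
  obtain ⟨n, rfl⟩ : ∃ n, k = n + 1 := ⟨k - 1, by omega⟩
  simp only [Nat.add_sub_cancel]
  clear hk
  induction n with
  | zero => simp
  | succ n ih =>
    refine (hstep n).trans ((mul_le_mul_of_nonneg_left ih (sq_nonneg _)).trans (le_of_eq ?_))
    ring
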